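/- arXiv:1908.06287 — 3 statements merged into one kernel-verified Lean document; each statement's English description precedes it below -/
import Mathlib

section
/- Strong duality (Lemma 1): let n, d ≥ 1, x_1, …, x_n ∈ ℝ^d, ξ > 0. Suppose each ℓ_i : ℝ → ℝ is convex (hence continuous, being finite-valued on ℝ), and r : ℝ^d → ℝ is ζ-strongly convex for some ζ > 0 (i.e., r(x+Δx) ≥ r(x) + ⟪g, Δx⟫ + (ζ/2)‖Δx‖² for every subgradient g of r at x) and lower semicontinuous. Define, with values in the extended reals, ℓ_i^*(y) = sup_{u∈ℝ}(y·u − ℓ_i(u)) and r^*(z) = sup_{s∈ℝ^d}(⟪s, z⟫ − r(s)), and set D(a) = −(1/n)·Σ_{i=1}^n ℓ_i^*(−a_i) − ξ·r^*(v(a)) with v(a) = (1/(ξn))·Σ_{i=1}^n a_i x_i. Then the primal infimum inf_{w∈ℝ^d} P(w), with P(w) = (1/n)·Σ_{i=1}^n ℓ_i(⟪x_i, w⟫) + ξ·r(w), is attained and equals the dual supremum sup_{a∈ℝ^n} D(a), i.e., min_w P(w) = sup_a D(a). -/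
open scoped RealInnerProductSpace BigOperators

theorem aux_min {d : ℕ} (F : EuclideanSpace ℝ (Fin d) → ℝ) (hc : Continuous F) (m : ℝ)
    (hm : 0 < m) (hF : StrongConvexOn Set.univ m F) : ∃ w₀, ∀ w, F w₀ ≤ F w := by
  obtain ⟨z, hz, hzmin⟩ := (isCompact_closedBall (0 : EuclideanSpace ℝ (Fin d)) 1).exists_isMinOn
    ⟨0, by simp⟩ hc.continuousOn
  have hz0 : F z ≤ F 0 := hzmin (by simp)
  set R : ℝ := 1 + 2 * (F 0 - F z) / m with hR
  have hR1 : 1 ≤ R := by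
    have : 0 ≤ 2 * (F 0 - F z) / m := div_nonneg (by linarith) hm.le
    linarith
  obtain ⟨w₀, hw₀, hmin⟩ := (isCompact_closedBall (0 : EuclideanSpace ℝ (Fin d)) R).exists_isMinOn
    ⟨0, by simp; linarith⟩ hc.continuousOn
  refine ⟨w₀, fun w => ?_⟩
  by_cases hw : ‖w‖ ≤ R
  · exact hmin (by simpa using hw)
  · push Not at hw
    have h0 : F w₀ ≤ F 0 := hmin (by simp; linarith)
    refine h0.trans ?_
    set ρ := ‖w‖ with hρ
    have hρ1 : 1 < ρ := by linarith
    have hρ0 : 0 < ρ := by linarith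
    have key := hF.2 (Set.mem_univ w) (Set.mem_univ 0)
      (show 0 ≤ ρ⁻¹ by positivity) (show 0 ≤ 1 - ρ⁻¹ by have := inv_le_one_of_one_le₀ hρ1.le; linarith) (by ring)
    simp only [smul_zero, add_zero, sub_zero, smul_eq_mul, ← hρ] at key
    have hball : F z ≤ F (ρ⁻¹ • w) := hzmin (by
      simp [norm_smul, ← hρ, abs_of_pos hρ0, hρ0.ne'])
    have h3 : ρ * F z ≤ F w + (ρ - 1) * F 0 - (ρ - 1) * (m / 2 * ρ) := by
      have := mul_le_mul_of_nonneg_left (hball.trans key) hρ0.le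
      have e : ρ * (ρ⁻¹ * F w + (1 - ρ⁻¹) * F 0 - ρ⁻¹ * (1 - ρ⁻¹) * (m / 2 * ρ ^ 2))
        = F w + (ρ - 1) * F 0 - (ρ - 1) * (m / 2 * ρ) := by
        field_simp
      linarith
    have h4 : 2 * (F 0 - F z) ≤ (ρ - 1) * m := by
      have : 2 * (F 0 - F z) / m ≤ ρ - 1 := by linarith
      rwa [div_le_iff₀ hm] at this
    nlinarith [mul_le_mul_of_nonneg_left h4 hρ0.le]

theorem aux_sep {n : ℕ} {E : Type*} [AddCommGroup E] [Module ℝ E]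
    (q : E → (Fin n → ℝ) → ℝ) (hq : ∀ w, Continuous (q w))
    (hconv : ∀ w w' p p' (a b : ℝ), 0 ≤ a → 0 ≤ b → a + b = 1 →
      q (a • w + b • w') (a • p + b • p') ≤ a * q w p + b * q w' p')
    (c : ℝ) (w₁ : E) (hw₁ : q w₁ 0 = c) (hmin : ∀ w, c ≤ q w 0) :
    ∃ b : Fin n → ℝ, ∀ w p, c ≤ ∑ i, b i * p i + q w p := by
  let S : Set ((Fin n → ℝ) × ℝ) := {z | ∃ w, q w z.1 < z.2}
  have hSo : IsOpen S := by
    have : S = ⋃ w, {z : (Fin n → ℝ) × ℝ | q w z.1 < z.2} := by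
      ext z; simp [S]
    rw [this]
    exact isOpen_iUnion fun w => isOpen_lt ((hq w).comp continuous_fst) continuous_snd
  have hSc : Convex ℝ S := by
    rintro ⟨p, t⟩ ⟨w, hw⟩ ⟨p', t'⟩ ⟨w', hw'⟩ a b ha hb hab
    refine ⟨a • w + b • w', ?_⟩
    refine (hconv w w' p p' a b ha hb hab).trans_lt ?_
    simp only at hw hw'
    simp only [Prod.smul_mk, Prod.mk_add_mk, smul_eq_mul]
    rcases ha.eq_or_lt with rfl | ha'
    · have : b = 1 := by linarith
      subst this; linarith
    · have h1 := mul_lt_mul_of_pos_left hw ha'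
      have h2 := mul_le_mul_of_nonneg_left hw'.le hb
      linarith
  have hnot : ((0 : Fin n → ℝ), c) ∉ S := by
    rintro ⟨w, hw⟩
    exact absurd hw (not_lt.2 (hmin w))
  obtain ⟨f, hf⟩ := geometric_hahn_banach_point_open hSc hSo hnot
  set γ : ℝ := f (0, 1) with hγ
  have hdec : ∀ p t, f (p, t) = ∑ i, f (Pi.single i 1, 0) * p i + γ * t := by
    intro p t
    have e : ((p, t) : (Fin n → ℝ) × ℝ)
        = ∑ i, p i • ((Pi.single i 1 : Fin n → ℝ), (0 : ℝ)) + t • ((0 : Fin n → ℝ), (1 : ℝ)) := by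
      ext j
      · simp [Prod.fst_sum, Finset.sum_apply, Pi.single_apply]
      · simp [Prod.snd_sum]
    rw [e, map_add, map_sum, map_smul]
    simp only [map_smul, smul_eq_mul, hγ]
    simp only [mul_comm]
  have hγ0 : 0 < γ := by
    have := hf (0, c + 1) ⟨w₁, by simp [hw₁]⟩
    rw [hdec, hdec] at this
    simp at this
    linarith
  refine ⟨fun i => f (Pi.single i 1, 0) / γ, fun w p => ?_⟩
  refine le_of_forall_pos_lt_add fun ε hε => ?_
  have := hf (p, q w p + ε) ⟨w, by simp [hε]⟩
  rw [hdec, hdec] at this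
  have e : ∑ i, f (Pi.single i 1, 0) / γ * p i = (∑ i, f (Pi.single i 1, 0) * p i) / γ := by
    rw [Finset.sum_div]; exact Finset.sum_congr rfl fun i _ => by ring
  rw [e]
  simp at this
  have h2 : γ * c / γ < (∑ i, f (Pi.single i 1, 0) * p i + γ * (q w p + ε)) / γ :=
    div_lt_div_of_pos_right this hγ0
  rw [add_div, mul_div_cancel_left₀ _ hγ0.ne', mul_div_cancel_left₀ _ hγ0.ne'] at h2
  linarith

theorem aux_iSup {ι : Type*} [Nonempty ι] (f : ι → ℝ) (hf : BddAbove (Set.range f)) :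
    (⨆ i, ((f i : ℝ) : EReal)) = ((⨆ i, f i : ℝ) : EReal) := by
  apply le_antisymm
  · exact iSup_le fun i => EReal.coe_le_coe_iff.2 (le_ciSup hf i)
  · refine le_of_forall_lt fun c hc => ?_
    induction c with
    | bot => exact lt_of_lt_of_le (EReal.bot_lt_coe _) (le_iSup (fun i => ((f i : ℝ) : EReal)) (Classical.arbitrary ι))
    | top => simp at hc
    | coe c =>
      obtain ⟨i, hi⟩ := exists_lt_of_lt_ciSup (EReal.coe_lt_coe_iff.1 hc)
      exact lt_of_lt_of_le (EReal.coe_lt_coe_iff.2 hi) (le_iSup (fun i => ((f i : ℝ) : EReal)) i)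

theorem aux_coe_sum {n : ℕ} (f : Fin n → ℝ) :
    ((∑ i, f i : ℝ) : EReal) = ∑ i, ((f i : ℝ) : EReal) := by
  induction n with
  | zero => simp
  | succ k ih => rw [Fin.sum_univ_succ, Fin.sum_univ_succ, EReal.coe_add, ih]

theorem aux_sum_sup {n : ℕ} {E : Type*} [Nonempty E] (hn : 1 ≤ n) (ξ : ℝ) (hξ : 0 < ξ)
    (g : Fin n → ℝ → ℝ) (h : E → ℝ) (c : ℝ)
    (H : ∀ (u : Fin n → ℝ) (s : E), (1 / (n : ℝ)) * ∑ i, g i (u i) + ξ * h s ≤ c) :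
    (∀ i, BddAbove (Set.range (g i))) ∧ BddAbove (Set.range h) ∧
    (1 / (n : ℝ)) * ∑ i, (⨆ u, g i u) + ξ * (⨆ s, h s) ≤ c := by
  have hn0 : (0 : ℝ) < n := by exact_mod_cast hn
  have hg : ∀ i, BddAbove (Set.range (g i)) := by
    intro i
    obtain ⟨s⟩ := ‹Nonempty E›
    refine ⟨n * (c - ξ * h s) - ∑ j ∈ Finset.univ.erase i, g j 0, ?_⟩
    rintro _ ⟨u, rfl⟩
    have := H (Function.update 0 i u) s
    rw [← Finset.add_sum_erase _ _ (Finset.mem_univ i)] at this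
    have e : ∑ j ∈ Finset.univ.erase i, g j ((Function.update (0 : Fin n → ℝ) i u) j)
        = ∑ j ∈ Finset.univ.erase i, g j 0 := by
      refine Finset.sum_congr rfl fun j hj => ?_
      rw [Function.update_of_ne (Finset.ne_of_mem_erase hj)]; rfl
    rw [e, Function.update_self] at this
    have h2 : (1 / (n : ℝ)) * (g i u + ∑ j ∈ Finset.univ.erase i, g j 0) ≤ c - ξ * h s := by
      linarith
    rw [one_div, inv_mul_le_iff₀ hn0] at h2
    linarith
  have hh : BddAbove (Set.range h) := by
    refine ⟨(c - (1 / (n : ℝ)) * ∑ i, g i 0) / ξ, ?_⟩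
    rintro _ ⟨s, rfl⟩
    have := H 0 s
    rw [le_div_iff₀ hξ]
    simp only [Pi.zero_apply] at this
    linarith
  refine ⟨hg, hh, ?_⟩
  refine le_of_forall_pos_le_add fun ε hε => ?_
  set δ := ε / (1 + ξ) with hδ
  have hδ0 : 0 < δ := by positivity
  have hu : ∀ i, ∃ u, (⨆ u, g i u) - δ < g i u := fun i =>
    exists_lt_of_lt_ciSup (by linarith)
  obtain ⟨s, hs⟩ : ∃ s, (⨆ s, h s) - δ < h s := exists_lt_of_lt_ciSup (by linarith)
  choose u hu using hu
  have h1 : ∑ i, (⨆ u, g i u) ≤ ∑ i, (g i (u i) + δ) :=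
    Finset.sum_le_sum fun i _ => by linarith [hu i]
  rw [Finset.sum_add_distrib] at h1
  simp at h1
  have h2 := mul_le_mul_of_nonneg_left h1 (one_div_pos.2 hn0).le
  have h3 : (1 / (n : ℝ)) * (∑ i, g i (u i) + n * δ) = (1 / (n : ℝ)) * ∑ i, g i (u i) + δ := by
    field_simp
  have h4 : δ + ξ * δ = ε := by rw [hδ]; field_simp
  have h5 := mul_le_mul_of_nonneg_left hs.le hξ.le
  linarith [H u s]

/-- Strong duality (Lemma 1): for convex finite-valued losses `ℓ i` and a
`ζ`-strongly convex, lower semicontinuous regularizer `r`, the primal infimum of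
`P(w) = (1/n) ∑ᵢ ℓᵢ(⟪xᵢ, w⟫) + ξ r(w)` is attained and equals the supremum of the
dual objective `D(a) = -(1/n) ∑ᵢ ℓᵢ^*(-aᵢ) - ξ r^*(v(a))`, with conjugates taking
values in the extended reals and `v(a) = (1/(ξ n)) ∑ᵢ aᵢ xᵢ`. -/
theorem strong_duality_ERM
    (n d : ℕ) (hn : 1 ≤ n) (hd : 1 ≤ d)
    (x : Fin n → EuclideanSpace ℝ (Fin d))
    (ℓ : Fin n → ℝ → ℝ) (hℓ : ∀ i : Fin n, ConvexOn ℝ Set.univ (ℓ i))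
    (r : EuclideanSpace ℝ (Fin d) → ℝ) (ζ : ℝ) (hζ : 0 < ζ)
    (hstrong : StrongConvexOn Set.univ ζ r) (hlsc : LowerSemicontinuous r)
    (ξ : ℝ) (hξ : 0 < ξ) :
    ∃ w₀ : EuclideanSpace ℝ (Fin d),
      (∀ w : EuclideanSpace ℝ (Fin d),
        (1 / (n : ℝ)) * ∑ i : Fin n, ℓ i ⟪x i, w₀⟫ + ξ * r w₀
          ≤ (1 / (n : ℝ)) * ∑ i : Fin n, ℓ i ⟪x i, w⟫ + ξ * r w) ∧
      (((1 / (n : ℝ)) * ∑ i : Fin n, ℓ i ⟪x i, w₀⟫ + ξ * r w₀ : ℝ) : EReal)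
        = ⨆ a : Fin n → ℝ,
            (-(((1 / (n : ℝ)) : EReal) *
                ∑ i : Fin n, ⨆ u : ℝ, (((-(a i)) * u - ℓ i u : ℝ) : EReal))
              - ((ξ : ℝ) : EReal) *
                ⨆ s : EuclideanSpace ℝ (Fin d),
                  ((⟪s, ((1 / (ξ * n)) • ∑ i : Fin n, a i • x i :
                      EuclideanSpace ℝ (Fin d))⟫ - r s : ℝ) : EReal)) := by
  have hn0 : (0 : ℝ) < n := by exact_mod_cast hn
  have hℓc : ∀ i, Continuous (ℓ i) := fun i => (hℓ i).locallyLipschitz.continuous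
  have hrc' : ConvexOn ℝ Set.univ r := (hstrong.strictConvexOn hζ).convexOn
  have hrc : Continuous r := hrc'.locallyLipschitz.continuous
  let q : EuclideanSpace ℝ (Fin d) → (Fin n → ℝ) → ℝ := fun w p =>
    (1 / (n : ℝ)) * ∑ i : Fin n, ℓ i (⟪x i, w⟫ + p i) + ξ * r w
  have hsum : ∀ (w w' : EuclideanSpace ℝ (Fin d)) (p p' : Fin n → ℝ) (a b : ℝ), 0 ≤ a → 0 ≤ b →
      a + b = 1 → (1 / (n : ℝ)) * ∑ i : Fin n, ℓ i (⟪x i, a • w + b • w'⟫ + (a • p + b • p') i)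
        ≤ a * ((1 / (n : ℝ)) * ∑ i : Fin n, ℓ i (⟪x i, w⟫ + p i))
          + b * ((1 / (n : ℝ)) * ∑ i : Fin n, ℓ i (⟪x i, w'⟫ + p' i)) := by
    intro w w' p p' a b ha hb hab
    have : ∑ i : Fin n, ℓ i (⟪x i, a • w + b • w'⟫ + (a • p + b • p') i)
        ≤ a * ∑ i : Fin n, ℓ i (⟪x i, w⟫ + p i) + b * ∑ i : Fin n, ℓ i (⟪x i, w'⟫ + p' i) := by
      rw [Finset.mul_sum, Finset.mul_sum, ← Finset.sum_add_distrib]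
      refine Finset.sum_le_sum fun i _ => ?_
      have := (hℓ i).2 (Set.mem_univ (⟪x i, w⟫ + p i)) (Set.mem_univ (⟪x i, w'⟫ + p' i)) ha hb hab
      simp only [smul_eq_mul] at this
      convert this using 2
      simp only [inner_add_right, inner_smul_right, Pi.add_apply, Pi.smul_apply, smul_eq_mul]
      ring
    have := mul_le_mul_of_nonneg_left this (one_div_pos.2 hn0).le
    linarith
  have hFs : StrongConvexOn Set.univ (ξ * ζ) (fun w => q w 0) := by
    refine ⟨convex_univ, ?_⟩
    intro w _ w' _ a b ha hb hab
    have h1 := hsum w w' 0 0 a b ha hb hab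
    have h2 := mul_le_mul_of_nonneg_left
      (hstrong.2 (Set.mem_univ w) (Set.mem_univ w') ha hb hab) hξ.le
    simp only [smul_zero, add_zero, smul_eq_mul] at h1 h2 ⊢
    simp only [q]
    linarith
  have hqc : ∀ w, Continuous (q w) := by
    intro w
    refine Continuous.add (continuous_const.mul (continuous_finsetSum _ fun i _ =>
      (hℓc i).comp ?_)) continuous_const
    fun_prop
  have hFc : Continuous (fun w => q w 0) := by
    refine Continuous.add (continuous_const.mul (continuous_finsetSum _ fun i _ =>
      (hℓc i).comp ?_)) (continuous_const.mul hrc)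
    fun_prop
  obtain ⟨w₀, hw₀⟩ := aux_min _ hFc (ξ * ζ) (by positivity) hFs
  obtain ⟨b, hb⟩ := aux_sep q hqc (by
    intro w w' p p' a b ha hb hab
    have h1 := hsum w w' p p' a b ha hb hab
    have h2 := mul_le_mul_of_nonneg_left
      (hrc'.2 (Set.mem_univ w) (Set.mem_univ w') ha hb hab) hξ.le
    simp only [smul_eq_mul] at h2
    simp only [q]
    linarith) (q w₀ 0) w₀ rfl hw₀
  have hq0 : ∀ w, q w 0 = (1 / (n : ℝ)) * ∑ i : Fin n, ℓ i ⟪x i, w⟫ + ξ * r w := by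
    intro w; simp [q]
  have hnE : ((1 : EReal) / ((n : ℝ) : EReal)) = ((1 / (n : ℝ) : ℝ) : EReal) := by
    rw [EReal.coe_div, EReal.coe_one]
  have hinner : ∀ (a : Fin n → ℝ) (s : EuclideanSpace ℝ (Fin d)),
      ξ * ⟪s, ((1 / (ξ * n)) • ∑ i : Fin n, a i • x i : EuclideanSpace ℝ (Fin d))⟫
        = (1 / (n : ℝ)) * ∑ i, a i * ⟪x i, s⟫ := by
    intro a s
    simp only [inner_smul_right, inner_sum, real_inner_comm s]
    field_simp
  refine ⟨w₀, fun w => by rw [← hq0, ← hq0]; exact hw₀ w, ?_⟩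
  rw [← hq0, hnE]
  apply le_antisymm
  · refine le_trans ?_ (le_iSup _ (fun i => n * b i))
    obtain ⟨hg, hh, hle⟩ := aux_sum_sup hn ξ hξ (fun i u => (-(n * b i)) * u - ℓ i u)
      (fun s : EuclideanSpace ℝ (Fin d) => ⟪s, ((1 / (ξ * n)) • ∑ i : Fin n, (n * b i) • x i :
                      EuclideanSpace ℝ (Fin d))⟫ - r s) (-(q w₀ 0)) (by
        intro u s
        have h1 := hb s (fun i => u i - ⟪x i, s⟫)
        have h2 := hinner (fun i => n * b i) s
        simp only [q, add_sub_cancel] at h1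
        rw [mul_sub, h2, Finset.sum_sub_distrib]
        have e1 : (1 / (n : ℝ)) * ∑ i, n * b i * ⟪x i, s⟫ = ∑ i, b i * ⟪x i, s⟫ := by
          rw [Finset.mul_sum]; refine Finset.sum_congr rfl fun i _ => by field_simp
        have e2 : (1 / (n : ℝ)) * ∑ i, -(n * b i) * u i = -∑ i, b i * u i := by
          rw [Finset.mul_sum, ← Finset.sum_neg_distrib]
          refine Finset.sum_congr rfl fun i _ => by field_simp
        rw [mul_sub, e1, e2]
        simp only [mul_sub, Finset.sum_sub_distrib] at h1
        simp only [q]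
        linarith)
    have eA : ∀ i, (⨆ u : ℝ, (((-(n * b i)) * u - ℓ i u : ℝ) : EReal)) = _ :=
      fun i => aux_iSup _ (hg i)
    have eB := aux_iSup _ hh
    simp only [eA]
    rw [eB, ← aux_coe_sum, ← EReal.coe_mul, ← EReal.coe_mul, ← EReal.coe_neg, ← EReal.coe_sub,
      EReal.coe_le_coe_iff]
    linarith
  · refine iSup_le fun a => ?_
    have hA : ((∑ i, (-(a i) * ⟪x i, w₀⟫ - ℓ i ⟪x i, w₀⟫) : ℝ) : EReal) ≤
        ∑ i : Fin n, ⨆ u : ℝ, (((-(a i)) * u - ℓ i u : ℝ) : EReal) := by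
      rw [aux_coe_sum]
      exact Finset.sum_le_sum fun i _ =>
        le_iSup (fun u : ℝ => (((-(a i)) * u - ℓ i u : ℝ) : EReal)) ⟪x i, w₀⟫
    have hB := le_iSup (fun s : EuclideanSpace ℝ (Fin d) =>
      ((⟪s, ((1 / (ξ * n)) • ∑ i : Fin n, a i • x i :
                      EuclideanSpace ℝ (Fin d))⟫ - r s : ℝ) : EReal)) w₀
    have hA' := mul_le_mul_of_nonneg_left hA
      (EReal.coe_nonneg.2 (one_div_pos.2 hn0).le)
    have hB' := mul_le_mul_of_nonneg_left hB (EReal.coe_nonneg.2 hξ.le)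
    refine (EReal.sub_le_sub (EReal.neg_le_neg_iff.2 hA') hB').trans ?_
    rw [← EReal.coe_mul, ← EReal.coe_mul, ← EReal.coe_neg, ← EReal.coe_sub,
      EReal.coe_le_coe_iff, hq0]
    have h2 := hinner a w₀
    rw [mul_sub, h2, Finset.sum_sub_distrib]
    simp only [neg_mul, Finset.sum_neg_distrib]
    linarith
end

section
/- Block-separable lower bound on the dual objective (equation (15)): let n, d, K ≥ 1, x_1, …, x_n ∈ ℝ^d, ξ > 0, κ > 0, and let D_1, …, D_K be a partition of {1, …, n}. Let ℓ_i^* : ℝ → ℝ for each i, and let r^* : ℝ^d → ℝ be differentiable and κ-compatible: for all v ∈ ℝ^d and Δa ∈ ℝ^n, r^*(v + u(Δa)) ≤ r^*(v) + ⟪∇r^*(v), u(Δa)⟫ + (κ/(2(ξn)²))·Σ_{k=1}^K ‖Σ_{i∈D_k} Δa_i x_i‖², where u(Δa) = (1/(ξn))·Σ_{i=1}^n Δa_i x_i. Define D(a) = −(1/n)·Σ_{i=1}^n ℓ_i^*(−a_i) − ξ·r^*(v(a)) with v(a) = (1/(ξn))·Σ_{i=1}^n a_i x_i, and define the local objectives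 ΔD_k(Δa_{[k]}; v, a_{[k]}) = −R_k(a_{[k]} + Δa_{[k]}) − (ξ/K)·r^*(v) − ⟪(1/n)·Σ_{i∈D_k} Δa_i x_i, ∇r^*(v)⟫ − (κ/(2ξn²))·‖Σ_{i∈D_k} Δa_i x_i‖², where R_k(a_{[k]}) = (1/n)·Σ_{i∈D_k} ℓ_i^*(−a_i). Then for all ā, Δa ∈ ℝ^n: D(ā + Δa) ≥ Σ_{k=1}^K ΔD_k(Δa_{[k]}; v(ā), ā_{[k]}). -/
open scoped RealInnerProductSpace BigOperators

theorem sum_blocks_aux {n K : ℕ} {M : Type*} [AddCommMonoid M] (B : Fin K → Finset (Fin n))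
    (hpart : ∀ i : Fin n, ∃! k : Fin K, i ∈ B k) (f : Fin n → M) :
    ∑ k : Fin K, ∑ i ∈ B k, f i = ∑ i : Fin n, f i := by
  rw [Finset.sum_comm' (t' := Finset.univ) (s' := fun i => Finset.univ.filter (fun k => i ∈ B k))
    (by simp)]
  refine Finset.sum_congr rfl fun i _ => ?_
  obtain ⟨k, hk, hu⟩ := hpart i
  have : Finset.univ.filter (fun k => i ∈ B k) = {k} := by
    ext j
    simp only [Finset.mem_filter, Finset.mem_univ, true_and, Finset.mem_singleton]
    exact ⟨fun h => hu j h, fun h => h ▸ hk⟩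
  rw [this, Finset.sum_singleton]

/-- Block-separable lower bound on the dual objective (equation (15)):
`D(abar + Δa) ≥ ∑ₖ ΔDₖ(Δa_{[k]}; v(abar), abar_{[k]})`. -/
theorem block_separable_dual_lower_bound
    (n d K : ℕ) (hn : 1 ≤ n) (hd : 1 ≤ d) (hK : 1 ≤ K)
    (x : Fin n → EuclideanSpace ℝ (Fin d))
    (ξ κ : ℝ) (hξ : 0 < ξ) (hκ : 0 < κ)
    (B : Fin K → Finset (Fin n))
    (hpart : ∀ i : Fin n, ∃! k : Fin K, i ∈ B k)
    (ℓstar : Fin n → ℝ → ℝ)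
    (rstar : EuclideanSpace ℝ (Fin d) → ℝ)
    (hdiff : Differentiable ℝ rstar)
    (hcompat : ∀ (v : EuclideanSpace ℝ (Fin d)) (Δa : Fin n → ℝ),
      rstar (v + (1 / (ξ * n)) • ∑ i : Fin n, Δa i • x i)
        ≤ rstar v
          + ⟪gradient rstar v, ((1 / (ξ * n)) • ∑ i : Fin n, Δa i • x i :
              EuclideanSpace ℝ (Fin d))⟫
          + κ / (2 * (ξ * n) ^ 2) *
              ∑ k : Fin K, ‖∑ i ∈ B k, Δa i • x i‖ ^ 2) :
    ∀ abar Δa : Fin n → ℝ,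
      -(1 / (n : ℝ)) * ∑ i : Fin n, ℓstar i (-(abar i + Δa i))
          - ξ * rstar ((1 / (ξ * n)) • ∑ i : Fin n, (abar i + Δa i) • x i)
        ≥ ∑ k : Fin K,
            (-((1 / (n : ℝ)) * ∑ i ∈ B k, ℓstar i (-(abar i + Δa i)))
              - (ξ / (K : ℝ)) * rstar ((1 / (ξ * n)) • ∑ i : Fin n, abar i • x i)
              - ⟪((1 / (n : ℝ)) • ∑ i ∈ B k, Δa i • x i : EuclideanSpace ℝ (Fin d)),
                  gradient rstar ((1 / (ξ * n)) • ∑ i : Fin n, abar i • x i)⟫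
              - κ / (2 * ξ * (n : ℝ) ^ 2) * ‖∑ i ∈ B k, Δa i • x i‖ ^ 2) := by
  intro abar Δa
  have hn0 : (n : ℝ) ≠ 0 := by
    have : 0 < n := hn
    positivity
  have hK0 : (K : ℝ) ≠ 0 := by
    have : 0 < K := hK
    positivity
  have h := hcompat ((1 / (ξ * n)) • ∑ i : Fin n, abar i • x i) Δa
  have hsum : (1 / (ξ * n)) • ∑ i : Fin n, (abar i + Δa i) • x i
      = (1 / (ξ * n)) • ∑ i : Fin n, abar i • x i
        + (1 / (ξ * n)) • ∑ i : Fin n, Δa i • x i := by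
    rw [← smul_add, ← Finset.sum_add_distrib]
    simp only [add_smul]
  rw [hsum]
  have hl := sum_blocks_aux B hpart (fun i => ℓstar i (-(abar i + Δa i)))
  have hx := sum_blocks_aux B hpart (fun i => Δa i • x i)
  generalize (1 / (ξ * n)) • ∑ i : Fin n, abar i • x i = v at *
  simp only [Finset.sum_sub_distrib, Finset.sum_neg_distrib, ← Finset.mul_sum, ← sum_inner,
    ← Finset.smul_sum, hl, hx, Finset.sum_const, Finset.card_univ, Fintype.card_fin, nsmul_eq_mul]
  rw [real_inner_smul_left, real_inner_comm]
  rw [real_inner_smul_right] at h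
  have h2 := mul_le_mul_of_nonneg_left h hξ.le
  generalize ∑ k : Fin K, ‖∑ i ∈ B k, Δa i • x i‖ ^ 2 = S at *
  generalize ⟪gradient rstar v, ∑ i : Fin n, Δa i • x i⟫ = G at *
  have e1 : ξ * (rstar v + 1 / (ξ * n) * G + κ / (2 * (ξ * n) ^ 2) * S)
      = (K : ℝ) * (ξ / K * rstar v) + 1 / n * G + κ / (2 * ξ * (n : ℝ) ^ 2) * S := by
    field_simp
  linarith
end

section
/- Lemma 2 (expected ascent under random scheduling): in the setting of the block-separable dual, let (Ω, ℱ, ℙ) be a probability space, U ∈ [0,1], and let I_1, …, I_K : Ω → {0,1} be measurable indicator variables with E[I_k] = U for every k, and η : Ω → [0,1] measurable with E[η] = U. Suppose each ℓ_i^* : ℝ → ℝ is convex, and r^* : ℝ^d → ℝ is differentiable and κ-compatible. Fix a ∈ ℝ^n, v ∈ ℝ^d, and a direction Δa ∈ ℝ^n with blocks Δa_{[k]}. Define the random post-update objective D̃ = −ξ·r^*(v + (1/(ξn))·Σ_{k=1}^K I_k·Σ_{i∈D_k} Δa_i x_i) − Σ_{k=1}^K R_k(a_{[k]} + η·Δa_{[k]}).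 Then E[D̃] ≥ Σ_{k=1}^K [ U·ΔD_k(Δa_{[k]}; v, a_{[k]}) + (1−U)·(−(ξ/K)·r^*(v) − R_k(a_{[k]})) ]. -/
open MeasureTheory
open scoped RealInnerProductSpace BigOperators

/-- Lemma 2 (expected ascent under random scheduling): the expected post-update dual
objective is lower bounded by a `U`-weighted combination of the local objectives
`ΔDₖ` and the current objective contributions. -/
theorem expected_ascent_random_scheduling
    (n d K : ℕ) (hn : 1 ≤ n) (hd : 1 ≤ d) (hK : 1 ≤ K)
    (x : Fin n → EuclideanSpace ℝ (Fin d))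
    (ξ κ : ℝ) (hξ : 0 < ξ) (hκ : 0 < κ)
    (B : Fin K → Finset (Fin n))
    (hpart : ∀ i : Fin n, ∃! k : Fin K, i ∈ B k)
    (ℓstar : Fin n → ℝ → ℝ)
    (hℓconv : ∀ i : Fin n, ConvexOn ℝ Set.univ (ℓstar i))
    (rstar : EuclideanSpace ℝ (Fin d) → ℝ)
    (hdiff : Differentiable ℝ rstar)
    (hcompat : ∀ (v : EuclideanSpace ℝ (Fin d)) (Δa : Fin n → ℝ),
      rstar (v + (1 / (ξ * n)) • ∑ i : Fin n, Δa i • x i)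
        ≤ rstar v
          + ⟪gradient rstar v, ((1 / (ξ * n)) • ∑ i : Fin n, Δa i • x i :
              EuclideanSpace ℝ (Fin d))⟫
          + κ / (2 * (ξ * n) ^ 2) *
              ∑ k : Fin K, ‖∑ i ∈ B k, Δa i • x i‖ ^ 2)
    (Ω : Type*) [MeasureSpace Ω] [IsProbabilityMeasure (volume : Measure Ω)]
    (U : ℝ) (hU : U ∈ Set.Icc (0 : ℝ) 1)
    (I : Fin K → Ω → ℝ)
    (hImeas : ∀ k, Measurable (I k))
    (hI01 : ∀ k ω, I k ω = 0 ∨ I k ω = 1)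
    (hIU : ∀ k, ∫ ω, I k ω = U)
    (η : Ω → ℝ) (hηmeas : Measurable η)
    (hη01 : ∀ ω, η ω ∈ Set.Icc (0 : ℝ) 1)
    (hηU : ∫ ω, η ω = U)
    (a Δa : Fin n → ℝ) (v : EuclideanSpace ℝ (Fin d)) :
    ∫ ω,
        (-ξ * rstar (v + (1 / (ξ * n)) •
              ∑ k : Fin K, I k ω • ∑ i ∈ B k, Δa i • x i)
          - ∑ k : Fin K, (1 / (n : ℝ)) *
              ∑ i ∈ B k, ℓstar i (-(a i + η ω * Δa i)))
      ≥ ∑ k : Fin K,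
          (U *
              (-((1 / (n : ℝ)) * ∑ i ∈ B k, ℓstar i (-(a i + Δa i)))
                - (ξ / (K : ℝ)) * rstar v
                - ⟪((1 / (n : ℝ)) • ∑ i ∈ B k, Δa i • x i :
                    EuclideanSpace ℝ (Fin d)), gradient rstar v⟫
                - κ / (2 * ξ * (n : ℝ) ^ 2) * ‖∑ i ∈ B k, Δa i • x i‖ ^ 2)
            + (1 - U) *
              (-(ξ / (K : ℝ)) * rstar v
                - (1 / (n : ℝ)) * ∑ i ∈ B k, ℓstar i (-(a i)))) := by
  classical
  have hn0 : (0:ℝ) < n := by exact_mod_cast hn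
  have hK0 : (0:ℝ) < K := by exact_mod_cast hK
  have hcont : ∀ i, Continuous (ℓstar i) := fun i =>
    continuousOn_univ.1 ((hℓconv i).continuousOn isOpen_univ)
  have hrc : Continuous rstar := hdiff.continuous
  obtain ⟨w, hw⟩ : ∃ w : Fin K → EuclideanSpace ℝ (Fin d),
      ∀ k, ∑ i ∈ B k, Δa i • x i = w k := ⟨_, fun _ => rfl⟩
  simp only [hw]
  -- integrability of the integrand
  have hint : Integrable (fun ω => (-ξ * rstar (v + (1 / (ξ * n)) • ∑ k : Fin K, I k ω • w k)
          - ∑ k : Fin K, (1 / (n : ℝ)) *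
              ∑ i ∈ B k, ℓstar i (-(a i + η ω * Δa i)))) := by
    let F : (Fin K → ℝ) × ℝ → ℝ := fun p =>
      (-ξ * rstar (v + (1 / (ξ * n)) • ∑ k : Fin K, p.1 k • w k)
          - ∑ k : Fin K, (1 / (n : ℝ)) *
              ∑ i ∈ B k, ℓstar i (-(a i + p.2 * Δa i)))
    have hF : Continuous F := by
      refine Continuous.sub ?_ ?_
      · refine continuous_const.mul (hrc.comp ?_)
        fun_prop
      · refine continuous_finsetSum _ fun k _ => continuous_const.mul ?_
        refine continuous_finsetSum _ fun i _ => (hcont i).comp ?_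
        fun_prop
    obtain ⟨C, hC⟩ := (isCompact_Icc (a := ((0, 0) : (Fin K → ℝ) × ℝ)) (b := (1, 1))).exists_bound_of_continuousOn
      hF.continuousOn
    have hm : Measurable (fun ω => ((fun k => I k ω, η ω) : (Fin K → ℝ) × ℝ)) :=
      (measurable_pi_lambda _ hImeas).prodMk hηmeas
    refine Integrable.of_bound (f := fun ω => F (fun k => I k ω, η ω))
      (hF.measurable.comp hm).aestronglyMeasurable C (Filter.Eventually.of_forall fun ω => ?_)
    apply hC
    refine ⟨⟨fun k => ?_, (hη01 ω).1⟩, ⟨fun k => ?_, (hη01 ω).2⟩⟩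
    · rcases hI01 k ω with h | h <;> simp [h]
    · rcases hI01 k ω with h | h <;> simp [h]
  have hIint : ∀ k, Integrable (I k) := fun k =>
    Integrable.of_bound (hImeas k).aestronglyMeasurable 1 (Filter.Eventually.of_forall fun ω => by
      rcases hI01 k ω with h | h <;> simp [h])
  have hηint : Integrable η :=
    Integrable.of_bound hηmeas.aestronglyMeasurable 1 (Filter.Eventually.of_forall fun ω => by
      rw [Real.norm_eq_abs, abs_of_nonneg (hη01 ω).1]; exact (hη01 ω).2)
  let C0 : Fin K → ℝ := fun k => -(ξ / (K : ℝ)) * rstar v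
                - (1 / (n : ℝ)) * ∑ i ∈ B k, ℓstar i (-(a i))
  let C1 : Fin K → ℝ := fun k => - ⟪((1 / (n : ℝ)) • w k :
                    EuclideanSpace ℝ (Fin d)), gradient rstar v⟫
                - κ / (2 * ξ * (n : ℝ) ^ 2) * ‖w k‖ ^ 2
  let C2 : Fin K → ℝ := fun k => -((1 / (n : ℝ)) * ∑ i ∈ B k, ℓstar i (-(a i + Δa i)))
      + (1 / (n : ℝ)) * ∑ i ∈ B k, ℓstar i (-(a i))
  have hgk : ∀ k, Integrable (fun ω => C0 k + I k ω * C1 k + η ω * C2 k) := fun k =>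
    ((integrable_const _).add ((hIint k).mul_const _)).add (hηint.mul_const _)
  have hgint : ∫ ω, ∑ k, (C0 k + I k ω * C1 k + η ω * C2 k)
      = ∑ k, (C0 k + U * C1 k + U * C2 k) := by
    rw [integral_finsetSum _ (fun k _ => hgk k)]
    refine Finset.sum_congr rfl fun k _ => ?_
    have h1 : Integrable (fun ω => C0 k + I k ω * C1 k) :=
      (integrable_const _).add ((hIint k).mul_const _)
    rw [integral_add h1 (hηint.mul_const _),
      integral_add (integrable_const _) ((hIint k).mul_const _), integral_mul_const,
      integral_mul_const, hIU, hηU]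
    simp
  have hpt : ∀ ω, ∑ k, (C0 k + I k ω * C1 k + η ω * C2 k) ≤
      (-ξ * rstar (v + (1 / (ξ * n)) • ∑ k : Fin K, I k ω • w k)
          - ∑ k : Fin K, (1 / (n : ℝ)) *
              ∑ i ∈ B k, ℓstar i (-(a i + η ω * Δa i))) := by
    intro ω
    have hloss : ∀ k, (1 / (n : ℝ)) * ∑ i ∈ B k, ℓstar i (-(a i + η ω * Δa i)) ≤
        η ω * ((1 / (n : ℝ)) * ∑ i ∈ B k, ℓstar i (-(a i + Δa i))) +
        (1 - η ω) * ((1 / (n : ℝ)) * ∑ i ∈ B k, ℓstar i (-(a i))) := by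
      intro k
      have : ∑ i ∈ B k, ℓstar i (-(a i + η ω * Δa i)) ≤
          η ω * ∑ i ∈ B k, ℓstar i (-(a i + Δa i)) + (1 - η ω) * ∑ i ∈ B k, ℓstar i (-(a i)) := by
        rw [Finset.mul_sum, Finset.mul_sum, ← Finset.sum_add_distrib]
        refine Finset.sum_le_sum fun i _ => ?_
        have h := (hℓconv i).2 (Set.mem_univ (-(a i + Δa i))) (Set.mem_univ (-(a i)))
          (hη01 ω).1 (sub_nonneg.2 (hη01 ω).2) (by ring)
        simp only [smul_eq_mul] at h
        convert h using 2
        ring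
      have h2 := mul_le_mul_of_nonneg_left this (by positivity : (0:ℝ) ≤ 1 / n)
      linarith
    choose b hb hbu using hpart
    have hblk : ∀ k, ∑ i ∈ B k, (I (b i) ω * Δa i) • x i = I k ω • w k := by
      intro k
      rw [← hw k, Finset.smul_sum]
      refine Finset.sum_congr rfl fun i hi => ?_
      rw [← hbu i k hi, mul_smul]
    have htot : ∑ i, (I (b i) ω * Δa i) • x i = ∑ k, I k ω • w k := by
      rw [← Finset.sum_congr rfl (fun k _ => hblk k)]
      rw [← Finset.sum_fiberwise (s := Finset.univ) (g := b)]
      refine Finset.sum_congr rfl fun k _ => Finset.sum_congr ?_ fun _ _ => rfl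
      ext i
      simp only [Finset.mem_filter, Finset.mem_univ, true_and]
      exact ⟨fun h => h ▸ hb i, fun h => (hbu i k h).symm⟩
    have hc := hcompat v (fun i => I (b i) ω * Δa i)
    simp only [htot, hblk] at hc
    have hsq : ∀ k, ‖I k ω • w k‖ ^ 2 = I k ω * ‖w k‖ ^ 2 := by
      intro k; rcases hI01 k ω with h | h <;> simp [h]
    simp only [hsq, inner_smul_right, inner_sum] at hc
    have hc2 := mul_le_mul_of_nonneg_left hc hξ.le
    have hl2 := Finset.sum_le_sum (fun k (_ : k ∈ Finset.univ) => hloss k)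
    have hconst : ∑ k : Fin K, (ξ / (K:ℝ)) * rstar v = ξ * rstar v := by
      simp; field_simp
    have e : ∑ k, (C0 k + I k ω * C1 k + η ω * C2 k) =
        - ∑ k : Fin K, (ξ / (K:ℝ)) * rstar v
        - (1 / n) * ∑ k, I k ω * ⟪gradient rstar v, w k⟫
        - κ / (2 * ξ * (n : ℝ) ^ 2) * ∑ k, I k ω * ‖w k‖ ^ 2
        - ∑ k, (η ω * ((1 / (n : ℝ)) * ∑ i ∈ B k, ℓstar i (-(a i + Δa i))) +
        (1 - η ω) * ((1 / (n : ℝ)) * ∑ i ∈ B k, ℓstar i (-(a i)))) := by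
      rw [Finset.mul_sum, Finset.mul_sum, ← Finset.sum_neg_distrib, ← Finset.sum_sub_distrib,
        ← Finset.sum_sub_distrib, ← Finset.sum_sub_distrib]
      refine Finset.sum_congr rfl fun k _ => ?_
      simp only [C0, C1, C2, real_inner_smul_left, real_inner_comm (w k)]
      rw [real_inner_comm (gradient rstar v) (w k)]
      ring
    have e3 : ∀ S T : ℝ, ξ * (rstar v + 1 / (ξ * n) * S + κ / (2 * (ξ * n) ^ 2) * T)
        = ξ * rstar v + (1 / n) * S + κ / (2 * ξ * (n : ℝ) ^ 2) * T := by
      intro S T; field_simp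
    rw [e3] at hc2
    rw [e, hconst]
    linarith
  have hfin := integral_mono (integrable_finsetSum _ fun k _ => hgk k) hint hpt
  rw [hgint] at hfin
  refine le_trans (le_of_eq ?_) hfin
  refine Finset.sum_congr rfl fun k _ => ?_
  simp only [C0, C1, C2]
  ring
end
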